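/- Let P be a preference function of span s ≥ 0 over A = {0,1,…,q−1} such that the q-th column function g_q has exactly one cycle C, let n > s, and let I = (I_1,…,I_n) be an initial n-word such that (I_1,…,I_{n−1}) is on C. Then the greedy sequence (P,I) is a de Bruijn sequence of order n: every n-word over A occurs exactly once as a contiguous window of (P,I). -/

import Mathlib

/-!
A greedy sequence is a trail in the de Bruijn graph, whose vertices are the `(n-1)`-words and whose
edges are the `n`-words: the greedy rule never repeats an edge. The trail can only stop at a vertex
all of whose out-edges are used. Since in- and out-degrees agree, that vertex is the initial vertex
`u = I₁…Iₙ₋₁`, the trail is closed, and a vertex with all out-edges used has all in-edges used.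

Away from `u`, the least preferred edge at a vertex is taken only after all other edges there. So if
the vertex reached from `x` by its least preferred edge has all its out-edges used, then that edge
is used, and hence so are all out-edges of `x`. On the last `s` letters, following least preferred
edges is iterating `g_q`. As `C` is the only cycle of `g_q` and `u` is on `C`, every vertex leads to
`u` along least preferred edges, and going back along these paths shows that every edge is used.
-/

namespace PaperDB

/-- The last `s` entries of `l`. -/
def lastN {α : Type*} (s : ℕ) (l : List α) : List α := l.drop (l.length - s)

/-- The digit appended by the greedy rule, if any: the most preferred digit `c`
(according to the preference function `P`, evaluated at the last `s` digits,
`P x 0` being the most preferred digit) such that the `n`-window created by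
appending `c` has not yet occurred as a contiguous subword. -/
def nextDigit (q s n : ℕ) (P : List (ZMod q) → Fin q → ZMod q)
    (l : List (ZMod q)) : Option (ZMod q) :=
  ((List.finRange q).map (fun i => P (lastN s l) i)).find?
    (fun c => !decide ((lastN (n - 1) l ++ [c]) <:+: l))

/-- Fuel-bounded greedy extension. -/
def greedyAux (q s n : ℕ) (P : List (ZMod q) → Fin q → ZMod q) :
    ℕ → List (ZMod q) → List (ZMod q)
  | 0, l => l
  | f + 1, l =>
    match nextDigit q s n P l with
    | none => l
    | some c => greedyAux q s n P f (l ++ [c])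

/-- The greedy sequence `(P, I)`: fuel `q ^ n` provably suffices for the
construction to halt, since every `n`-word occurs at most once. -/
def greedy (q s n : ℕ) (P : List (ZMod q) → Fin q → ZMod q)
    (I : List (ZMod q)) : List (ZMod q) :=
  greedyAux q s n P (q ^ n) I

/-- The number of occurrences of `w` as a length-`n` contiguous window of `l`. -/
def windowCount (q n : ℕ) (w l : List (ZMod q)) : ℕ :=
  ((List.range (l.length + 1 - n)).filter
    (fun i => decide ((l.drop i).take n = w))).length

/-- `P` is a preference function (of span `s`): it assigns to every `s`-word a
permutation of the alphabet `ZMod q`. -/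
def IsPrefFun (q s : ℕ) (P : List (ZMod q) → Fin q → ZMod q) : Prop :=
  ∀ x : List (ZMod q), x.length = s → Function.Bijective (P x)

/-- The `(k+1)`-st column function `g_{k+1}` induced by `P`:
`g(x_1,…,x_s) = (x_2,…,x_s,P_{k+1}(x_1,…,x_s))`. -/
def colFun (q : ℕ) (P : List (ZMod q) → Fin q → ZMod q) (k : Fin q)
    (x : List (ZMod q)) : List (ZMod q) :=
  (x ++ [P x k]).tail

section Dynamics

open Function

variable {α : Type*} {f : α → α}

lemma exists_iterate_mem_periodicPts {S : Set α} (hS : S.Finite) (hf : Set.MapsTo f S S) {x : α}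
    (hx : x ∈ S) : ∃ t, f^[t] x ∈ periodicPts f := by
  obtain ⟨i, j, hij, heq⟩ :=
    hS.exists_lt_map_eq_of_forall_mem (f := fun t ↦ f^[t] x) fun t ↦ hf.iterate t hx
  refine ⟨i, mk_mem_periodicPts (n := j - i) (by omega) ?_⟩
  rw [IsPeriodicPt, IsFixedPt, ← iterate_add_apply, Nat.sub_add_cancel hij.le]
  exact heq.symm

lemma exists_iterate_eq_of_forall_periodicPts {S : Set α} (hS : S.Finite) (hf : Set.MapsTo f S S)
    {v : α} (hv : v ∈ periodicPts f)
    (hcycle : ∀ w ∈ S, w ∈ periodicPts f → w ∈ Set.range fun t ↦ f^[t] v)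
    {x y : α} (hx : x ∈ S) (hy : y ∈ Set.range fun t ↦ f^[t] v) : ∃ t, f^[t] x = y := by
  obtain ⟨i, hi⟩ := exists_iterate_mem_periodicPts hS hf hx
  obtain ⟨j, hj⟩ := hcycle _ (hf.iterate i hx) hi
  have hy' : y ∈ periodicOrbit f (f^[i] x) := by
    rw [← hj, periodicOrbit_apply_iterate_eq hv]
    exact (mem_periodicOrbit_iff hv).2 hy
  obtain ⟨t, ht⟩ := (mem_periodicOrbit_iff hi).1 hy'
  exact ⟨t + i, by rwa [iterate_add_apply]⟩

end Dynamics

section Trail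

open Finset

variable {β D : Type*} {N : ℕ} {V : ℕ → β} {outLabel inLabel : ℕ → D}

lemma card_departures_add_eq_card_arrivals_add [DecidableEq β] (V : ℕ → β) (N : ℕ) (y : β) :
    #{i ∈ range N | V i = y} + (if V N = y then 1 else 0) =
      #{i ∈ range N | V (i + 1) = y} + (if V 0 = y then 1 else 0) := by
  rw [card_filter, card_filter, ← sum_range_succ (fun i ↦ if V i = y then 1 else 0),
    ← sum_range_succ' (fun i ↦ if V i = y then 1 else 0)]

lemma card_le_card_departures [DecidableEq β] [Fintype D] {y : β}
    (hout : ∀ c, ∃ i < N, V i = y ∧ outLabel i = c) :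
    Fintype.card D ≤ #{i ∈ range N | V i = y} := by
  refine card_le_card_of_surjOn outLabel fun c _ ↦ ?_
  obtain ⟨i, hi, hy, hc⟩ := hout c
  exact ⟨i, by simp [hi, hy], hc⟩

lemma injOn_arrivals [DecidableEq β]
    (hinj : Set.InjOn (fun i ↦ (inLabel i, V (i + 1))) (Set.Iio N)) (y : β) :
    Set.InjOn inLabel ({i ∈ range N | V (i + 1) = y} : Finset ℕ) := by
  intro i hi j hj hij
  simp only [coe_filter, mem_range, Set.mem_ofPred_eq] at hi hj
  exact hinj hi.1 hj.1 (Prod.ext hij (hi.2.trans hj.2.symm))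

/-- Otherwise the final vertex would have been entered more often than left, although all its
departures are used. -/
lemma start_eq_end_of_forall_departure [Finite D]
    (hinj : Set.InjOn (fun i ↦ (inLabel i, V (i + 1))) (Set.Iio N))
    (hout : ∀ c, ∃ i < N, V i = V N ∧ outLabel i = c) : V 0 = V N := by
  classical
  have := Fintype.ofFinite D
  by_contra hne
  have hbalance := card_departures_add_eq_card_arrivals_add V N (V N)
  have hdepart := card_le_card_departures hout
  have harrive := card_le_card_of_injOn inLabel (fun _ _ ↦ mem_univ _) (injOn_arrivals hinj (V N))
  rw [card_univ] at harrive
  simp only [if_true, if_neg hne] at hbalance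
  omega

lemma exists_arrival_of_forall_departure [Finite D]
    (hinj : Set.InjOn (fun i ↦ (inLabel i, V (i + 1))) (Set.Iio N)) (hclosed : V 0 = V N) {y : β}
    (hout : ∀ c, ∃ i < N, V i = y ∧ outLabel i = c) (c : D) :
    ∃ i < N, V (i + 1) = y ∧ inLabel i = c := by
  classical
  have := Fintype.ofFinite D
  have hbalance := card_departures_add_eq_card_arrivals_add V N y
  have hdepart := card_le_card_departures hout
  rw [hclosed] at hbalance
  have hsurj := surjOn_of_injOn_of_card_le inLabel (t := univ) (fun _ _ ↦ mem_coe.2 (mem_univ _))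
    (injOn_arrivals hinj y) (by rw [card_univ]; omega)
  obtain ⟨i, hi, hc⟩ := hsurj (mem_coe.2 (mem_univ c))
  simp only [coe_filter, mem_range, Set.mem_ofPred_eq] at hi
  exact ⟨i, hi.1, hi.2, hc⟩

end Trail

section LastN

variable {α : Type*} {s k : ℕ} {l : List α}

lemma length_lastN (s : ℕ) (l : List α) : (lastN s l).length = min s l.length := by
  rw [lastN, List.length_drop]
  omega

lemma lastN_of_length_le (h : l.length ≤ s) : lastN s l = l := by
  rw [lastN, Nat.sub_eq_zero_of_le h, List.drop_zero]

lemma lastN_lastN (h : s ≤ k) (l : List α) : lastN s (lastN k l) = lastN s l := by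
  unfold lastN
  rw [List.drop_drop, List.length_drop]
  congr 1
  omega

lemma lastN_concat_succ (k : ℕ) (l : List α) (c : α) :
    lastN (k + 1) (l ++ [c]) = lastN k l ++ [c] :=
  List.rtake_concat_succ l k c

lemma lastN_tail (h : s < l.length) : lastN s l.tail = lastN s l := by
  rw [lastN, lastN, List.drop_tail, List.length_tail]
  congr 1
  omega

lemma lastN_concat_tail (s : ℕ) (l : List α) (c : α) :
    lastN s (l ++ [c]).tail = (lastN s l ++ [c]).tail := by
  rcases Nat.lt_or_ge l.length s with h | h
  · rw [lastN_of_length_le h.le, lastN_of_length_le (by simpa using h.le)]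
  · rw [lastN_tail (by simpa using Nat.lt_succ_of_le h), ← lastN_concat_succ, lastN, lastN,
      List.tail_drop, List.length_append, List.length_singleton]
    congr 1
    omega

lemma lastN_take_add {j : ℕ} (h : s + j ≤ l.length) :
    lastN s (l.take (s + j)) = (l.drop j).take s := by
  rw [lastN, List.length_take_of_le h, Nat.add_sub_cancel_left, List.drop_take,
    Nat.add_sub_cancel]

lemma eq_lastN_of_suffix {x : List α} (h : x <:+ l) : x = lastN x.length l :=
  List.suffix_iff_eq_drop.1 h

end LastN

section Windows

variable {α : Type*} {n k i : ℕ} {l : List α}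

/-- The contiguous window of length `n` of `l` that starts at position `i`. It is truncated if
`l.length < i + n`. -/
def window (n : ℕ) (l : List α) (i : ℕ) : List α := (l.drop i).take n

lemma length_window (h : i + n ≤ l.length) : (window n l i).length = n := by
  rw [window, List.length_take, List.length_drop]
  omega

lemma window_isInfix (n : ℕ) (l : List α) (i : ℕ) : window n l i <:+: l :=
  (List.take_prefix _ _).isInfix.trans (List.drop_suffix _ _).isInfix

lemma isInfix_iff_exists_window {w : List α} (hw : w.length = n) :
    w <:+: l ↔ ∃ i, i + n ≤ l.length ∧ window n l i = w := by
  constructor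
  · rintro ⟨a, b, rfl⟩
    refine ⟨a.length, by simp only [List.length_append]; omega, ?_⟩
    simp [window, ← hw]
  · rintro ⟨i, -, rfl⟩
    exact window_isInfix n l i

lemma window_append (l' : List α) (h : i + n ≤ l.length) :
    window n (l ++ l') i = window n l i := by
  rw [window, window, List.drop_append_of_le_length (by omega),
    List.take_append_of_le_length (by rw [List.length_drop]; omega)]

lemma window_eq_lastN (h : i + n = l.length) : window n l i = lastN n l := by
  rw [window, lastN, List.take_of_length_le (by rw [List.length_drop]; omega)]
  congr 1
  omega

lemma window_succ_eq_concat (d : α) (h : i + k < l.length) :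
    window (k + 1) l i = window k l i ++ [l.getD (i + k) d] := by
  rw [window, List.take_add_one, window]
  simp [List.getElem?_eq_getElem h]

lemma window_succ_eq_cons (d : α) (k : ℕ) (h : i < l.length) :
    window (k + 1) l i = l.getD i d :: window k l (i + 1) := by
  rw [window, List.drop_eq_getElem_cons h, List.take_succ_cons, window,
    List.getD_eq_getElem _ _ h]

/-- No word of length `n` occurs twice in `l`, that is, `l` is a trail in the de Bruijn graph of
order `n`. -/
def HasDistinctWindows (n : ℕ) (l : List α) : Prop :=
  ∀ ⦃i j⦄, i + n ≤ l.length → j + n ≤ l.length → window n l i = window n l j → i = j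

lemma hasDistinctWindows_of_length_le (h : l.length ≤ n) : HasDistinctWindows n l := by
  intro i j hi hj _
  omega

lemma HasDistinctWindows.concat {c : α} (hl : HasDistinctWindows (k + 1) l)
    (hnew : ¬ lastN k l ++ [c] <:+: l) : HasDistinctWindows (k + 1) (l ++ [c]) := by
  intro i j hi hj hij
  by_contra hne
  wlog hlt : i < j generalizing i j
  · exact this hj hi hij.symm (Ne.symm hne) (by omega)
  simp only [List.length_append, List.length_singleton] at hi hj
  rw [window_append _ (by omega : i + (k + 1) ≤ l.length)] at hij
  rcases Nat.lt_or_ge l.length (j + (k + 1)) with hlast | hold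
  · rw [window_eq_lastN (l := l ++ [c])
      (by simp only [List.length_append, List.length_singleton]; omega), lastN_concat_succ] at hij
    exact hnew (hij ▸ window_isInfix _ _ _)
  · rw [window_append _ hold] at hij
    exact hne (hl (by omega) hold hij)

lemma HasDistinctWindows.length_lt [Fintype α] (hl : HasDistinctWindows n l) :
    l.length < n + Fintype.card α ^ n := by
  by_contra! hlen
  let word : Fin (Fintype.card α ^ n + 1) → List.Vector α n :=
    fun i ↦ ⟨window n l i, length_window (by omega)⟩
  have hword : Function.Injective word := fun i j hij ↦
    Fin.ext (hl (by omega) (by omega) (congrArg Subtype.val hij))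
  have hcard := Fintype.card_le_of_injective word hword
  rw [Fintype.card_fin, card_vector] at hcard
  omega

lemma HasDistinctWindows.windowCount_eq_one {q n : ℕ} {l w : List (ZMod q)}
    (hl : HasDistinctWindows n l) (hw : w.length = n) (hwl : w <:+: l) :
    windowCount q n w l = 1 := by
  obtain ⟨i, hi, rfl⟩ := (isInfix_iff_exists_window hw).1 hwl
  rw [windowCount, ← List.toFinset_card_of_nodup (List.nodup_range.filter _),
    Finset.card_eq_one]
  refine ⟨i, ?_⟩
  ext j
  simp only [List.mem_toFinset, List.mem_filter, List.mem_range, decide_eq_true_eq,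
    Finset.mem_singleton]
  constructor
  · rintro ⟨hj, hji⟩
    exact hl (by omega) hi hji
  · rintro rfl
    exact ⟨by omega, rfl⟩

end Windows

section Saturation

variable {α : Type*} {k : ℕ} {l x y : List α}

/-- All edges of the de Bruijn graph that leave the vertex `x` occur in `l`; here a vertex is a
word `x`, and the edge leaving it by the digit `c` is `x ++ [c]`. -/
def IsSaturated (l x : List α) : Prop := ∀ c, x ++ [c] <:+: l

lemma IsSaturated.append (hx : IsSaturated l x) (l' : List α) : IsSaturated (l ++ l') x :=
  fun c ↦ (hx c).trans (List.prefix_append _ _).isInfix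

lemma IsSaturated.exists_departure (hx : IsSaturated l x) (hk : x.length = k) (d c : α) :
    ∃ i < l.length - k, window k l i = x ∧ l.getD (i + k) d = c := by
  obtain ⟨i, hi, hw⟩ := (isInfix_iff_exists_window (n := k + 1) (by simp [hk])).1 (hx c)
  rw [window_succ_eq_concat d (by omega)] at hw
  obtain ⟨hwx, hc⟩ := List.append_inj hw (by rw [length_window (by omega), hk])
  exact ⟨i, by omega, hwx, List.singleton_inj.1 hc⟩

lemma HasDistinctWindows.injOn_getD_window (hl : HasDistinctWindows (k + 1) l) (d : α) :
    Set.InjOn (fun i ↦ (l.getD i d, window k l (i + 1))) (Set.Iio (l.length - k)) := by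
  intro i hi j hj hij
  obtain ⟨hd, hw⟩ := Prod.mk.inj hij
  rw [Set.mem_Iio] at hi hj
  refine hl (by omega) (by omega) ?_
  rw [window_succ_eq_cons d k (by omega), window_succ_eq_cons d k (by omega), hd, hw]

lemma HasDistinctWindows.take_eq_lastN [Finite α] (hl : HasDistinctWindows (k + 1) l)
    (hk : k ≤ l.length) (hend : IsSaturated l (lastN k l)) : l.take k = lastN k l := by
  rcases isEmpty_or_nonempty α with _ | ⟨⟨d⟩⟩
  · exact Subsingleton.elim _ _
  have hlast := Nat.sub_add_cancel hk
  rw [← window_eq_lastN hlast] at hend ⊢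
  exact start_eq_end_of_forall_departure (V := window k l) (hl.injOn_getD_window d)
    (hend.exists_departure (length_window hlast.le) d)

lemma HasDistinctWindows.cons_isInfix [Finite α] (hl : HasDistinctWindows (k + 1) l)
    (hk : k ≤ l.length) (hclosed : l.take k = lastN k l) (hy : y.length = k)
    (hsat : IsSaturated l y) (c : α) : c :: y <:+: l := by
  rw [← window_eq_lastN (Nat.sub_add_cancel hk)] at hclosed
  obtain ⟨i, hi, rfl, hc⟩ := exists_arrival_of_forall_departure (V := window k l)
    (hl.injOn_getD_window c) hclosed (hsat.exists_departure hy c) c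
  rw [← hc, ← window_succ_eq_cons c k (by omega)]
  exact window_isInfix _ _ _

end Saturation

section ColumnFunction

variable {q s k : ℕ} {P : List (ZMod q) → Fin q → ZMod q} {gq : Fin q}

lemma length_colFun (x : List (ZMod q)) : (colFun q P gq x).length = x.length := by
  simp [colFun]

lemma length_colFun_iterate (t : ℕ) (x : List (ZMod q)) :
    ((colFun q P gq)^[t] x).length = x.length := by
  induction t with
  | zero => rfl
  | succ t ih => rw [Function.iterate_succ_apply', length_colFun, ih]

/-- `P ∘ lastN s` is `P` regarded as a preference function of larger span. -/
lemma semiconj_lastN_colFun (s : ℕ) (P : List (ZMod q) → Fin q → ZMod q) (gq : Fin q) :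
    Function.Semiconj (lastN s) (colFun q (P ∘ lastN s) gq) (colFun q P gq) :=
  fun x ↦ lastN_concat_tail s x _

lemma exists_colFun_iterate_eq [NeZero q] {v : List (ZMod q)}
    (hv : v ∈ Function.periodicPts (colFun q P gq))
    (hcycle : ∀ w : List (ZMod q), w.length = s → w ∈ Function.periodicPts (colFun q P gq) →
      w ∈ Set.range fun t ↦ (colFun q P gq)^[t] v)
    {x y : List (ZMod q)} (hx : x.length = s)
    (hy : y ∈ Set.range fun t ↦ (colFun q P gq)^[t] v) : ∃ t, (colFun q P gq)^[t] x = y :=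
  exists_iterate_eq_of_forall_periodicPts (List.finite_length_eq (ZMod q) s)
    (fun x hx ↦ (length_colFun x).trans hx) hv hcycle hx hy

lemma lastN_colFun_iterate_eq_take {I z : List (ZMod q)}
    (hI : ∀ j, s ≤ j → j < k → I.getD j 0 = P ((I.drop (j - s)).take s) gq)
    (hkI : k ≤ I.length) (hz : z.length = k) (hzI : lastN s z = I.take s) {j : ℕ}
    (hj : s + j ≤ k) :
    lastN (s + j) ((colFun q (P ∘ lastN s) gq)^[j] z) = I.take (s + j) := by
  induction j with
  | zero => exact hzI
  | succ j ih =>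
    set z' := (colFun q (P ∘ lastN s) gq)^[j] z with hz'
    have hlen : z'.length = k := (length_colFun_iterate j z).trans hz
    have hprev : lastN (s + j) z' = I.take (s + j) := ih (by omega)
    have hctx : lastN s z' = (I.drop j).take s := by
      rw [← lastN_lastN (Nat.le_add_right s j), hprev, lastN_take_add (by omega)]
    have hnext := hI (s + j) (by omega) (by omega)
    rw [Nat.add_sub_cancel_left, List.getD_eq_getElem _ _ (by omega)] at hnext
    rw [Function.iterate_succ_apply', ← hz', colFun, Function.comp_apply, hctx, ← add_assoc,
      lastN_tail (by simp only [List.length_append, List.length_singleton]; omega),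
      lastN_concat_succ, hprev, ← hnext, List.take_append_getElem]

/-- Once the orbit of `x` has reached the vertex `I₁…I_s` of `C`, it spells out the remaining
letters `I_{s+1}…I_k`. -/
lemma exists_colFun_comp_lastN_iterate_eq_take {I x : List (ZMod q)}
    (hI : ∀ j, s ≤ j → j < k → I.getD j 0 = P ((I.drop (j - s)).take s) gq)
    (hsk : s ≤ k) (hkI : k ≤ I.length) (hx : x.length = k)
    (hreach : ∃ t, (colFun q P gq)^[t] (lastN s x) = I.take s) :
    ∃ t, (colFun q (P ∘ lastN s) gq)^[t] x = I.take k := by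
  obtain ⟨t, ht⟩ := hreach
  have hstart : lastN s ((colFun q (P ∘ lastN s) gq)^[t] x) = I.take s :=
    ((semiconj_lastN_colFun s P gq).iterate_right t x).trans ht
  have hspell := lastN_colFun_iterate_eq_take hI hkI ((length_colFun_iterate t x).trans hx) hstart
    (j := k - s) (by omega)
  rw [Nat.add_sub_cancel' hsk, ← Function.iterate_add_apply,
    lastN_of_length_le ((length_colFun_iterate _ x).trans hx).le] at hspell
  exact ⟨_, hspell⟩

end ColumnFunction

section Greedy

variable {q s n k : ℕ} {P : List (ZMod q) → Fin q → ZMod q} {gq : Fin q} {c : ZMod q}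
  {I l u : List (ZMod q)}

lemma nextDigit_succ_eq_none_iff :
    nextDigit q s (k + 1) P l = none ↔ ∀ i, lastN k l ++ [P (lastN s l) i] <:+: l := by
  simp [nextDigit]

lemma nextDigit_succ_eq_some_iff :
    nextDigit q s (k + 1) P l = some c ↔ ¬ lastN k l ++ [c] <:+: l ∧
      ∃ i, P (lastN s l) i = c ∧ ∀ j < i, lastN k l ++ [P (lastN s l) j] <:+: l := by
  simp only [nextDigit, List.find?_eq_some_iff_getElem, List.length_map, List.length_finRange,
    List.getElem_map, List.getElem_finRange, Bool.not_not, Bool.not_eq_true', decide_eq_true_eq,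
    decide_eq_false_iff_not, Nat.add_sub_cancel]
  exact and_congr_right fun _ ↦
    ⟨fun ⟨i, hi, hc, hbefore⟩ ↦ ⟨⟨i, hi⟩, hc, fun j hj ↦ hbefore j hj⟩,
      fun ⟨i, hc, hbefore⟩ ↦ ⟨i, i.2, hc, fun j hj ↦ hbefore ⟨j, hj.trans i.2⟩ hj⟩⟩

lemma isSaturated_lastN_of_nextDigit_eq_none (hP : IsPrefFun q s P) (hs : s ≤ l.length)
    (h : nextDigit q s (k + 1) P l = none) : IsSaturated l (lastN k l) := by
  intro c
  obtain ⟨i, rfl⟩ := (hP (lastN s l) (by rw [length_lastN, min_eq_left hs])).2 c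
  exact nextDigit_succ_eq_none_iff.1 h i

lemma greedyAux_induction {motive : List (ZMod q) → Prop}
    (step : ∀ l c, motive l → nextDigit q s n P l = some c → motive (l ++ [c])) (f : ℕ)
    (hl : motive l) : motive (greedyAux q s n P f l) := by
  induction f generalizing l with
  | zero => exact hl
  | succ f ih =>
    rw [greedyAux]
    cases hc : nextDigit q s n P l with
    | none => exact hl
    | some c => exact ih (step l c hl hc)

lemma nextDigit_greedyAux_eq_none_or_length_eq (f : ℕ) (l : List (ZMod q)) :
    nextDigit q s n P (greedyAux q s n P f l) = none ∨
      (greedyAux q s n P f l).length = l.length + f := by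
  induction f generalizing l with
  | zero => exact Or.inr rfl
  | succ f ih =>
    rw [greedyAux]
    cases hc : nextDigit q s n P l with
    | none => exact Or.inl hc
    | some c =>
      refine (ih (l ++ [c])).imp_right fun h ↦ ?_
      rw [h, List.length_append, List.length_singleton]
      omega

lemma prefix_greedy (q s n : ℕ) (P : List (ZMod q) → Fin q → ZMod q) (I : List (ZMod q)) :
    I <+: greedy q s n P I :=
  greedyAux_induction (fun _ _ h _ ↦ h.trans (List.prefix_append _ _)) _ List.prefix_rfl

lemma hasDistinctWindows_greedy (hI : I.length ≤ k + 1) :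
    HasDistinctWindows (k + 1) (greedy q s (k + 1) P I) :=
  greedyAux_induction (fun _ _ h hc ↦ h.concat (nextDigit_succ_eq_some_iff.1 hc).1) _
    (hasDistinctWindows_of_length_le hI)

lemma nextDigit_greedy_eq_none [NeZero q] (hI : I.length = k + 1) :
    nextDigit q s (k + 1) P (greedy q s (k + 1) P I) = none := by
  refine (nextDigit_greedyAux_eq_none_or_length_eq _ I).resolve_right fun hlen ↦ ?_
  have hlt := (hasDistinctWindows_greedy (s := s) (P := P) hI.le).length_lt
  rw [greedy, hlen, hI, ZMod.card] at hlt
  exact hlt.false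

/-- In the trail `l`, the least preferred edge at a vertex other than `u` comes after all other
edges there. The order in time is not recorded: the definition says that where the edge with digit
`P x gq` is used, the vertex `x` is saturated, and it is preserved as `l` grows. -/
def LeastEdgesLast (k : ℕ) (P : List (ZMod q) → Fin q → ZMod q) (gq : Fin q)
    (u l : List (ZMod q)) : Prop :=
  ∀ x : List (ZMod q), x.length = k → x ≠ u → x ++ [P x gq] <:+: l → IsSaturated l x

lemma leastEdgesLast_take (hI : I.length = k + 1) : LeastEdgesLast k P gq (I.take k) I := by
  intro x hx hne hedge
  have hxI := hedge.eq_of_length (by simp [hx, hI])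
  exact absurd (by rw [← hxI, ← hx, List.take_left]) hne

lemma LeastEdgesLast.concat (hP : IsPrefFun q s P) (hgq : IsTop gq) (hsk : s ≤ k)
    (hl : LeastEdgesLast k (P ∘ lastN s) gq u l) (hc : nextDigit q s (k + 1) P l = some c) :
    LeastEdgesLast k (P ∘ lastN s) gq u (l ++ [c]) := by
  intro x hx hne hedge
  rcases List.infix_concat_iff.1 hedge with hnew | hold
  · have hx_eq : x ++ [P (lastN s x) gq] = lastN k l ++ [c] := by
      rw [← lastN_concat_succ]
      simpa [hx] using eq_lastN_of_suffix hnew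
    obtain ⟨rfl, hdigit⟩ := List.append_inj' hx_eq rfl
    rw [List.singleton_inj, lastN_lastN hsk] at hdigit
    obtain ⟨-, i, hi, hbefore⟩ := nextDigit_succ_eq_some_iff.1 hc
    rw [length_lastN] at hx
    have hbij := hP (lastN s l) (by rw [length_lastN]; omega)
    obtain rfl : i = gq := hbij.1 (hi.trans hdigit.symm)
    intro d
    obtain ⟨j, rfl⟩ := hbij.2 d
    rcases (hgq j).lt_or_eq with hj | rfl
    · exact (hbefore j hj).trans (List.prefix_append _ _).isInfix
    · rwa [Function.comp_apply, lastN_lastN hsk] at hedge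
  · exact (hl x hx hne hold).append [c]

lemma leastEdgesLast_greedy (hP : IsPrefFun q s P) (hgq : IsTop gq) (hsk : s ≤ k)
    (hI : I.length = k + 1) :
    LeastEdgesLast k (P ∘ lastN s) gq (I.take k) (greedy q s (k + 1) P I) :=
  greedyAux_induction (fun _ _ h hc ↦ h.concat hP hgq hsk hc) _ (leastEdgesLast_take hI)

lemma LeastEdgesLast.isSaturated_of_iterate (hl : LeastEdgesLast k P gq u l)
    (hu : IsSaturated l u)
    (hin : ∀ y : List (ZMod q), y.length = k → IsSaturated l y → ∀ c, c :: y <:+: l)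
    {t : ℕ} {x : List (ZMod q)} (hx : x.length = k) (ht : (colFun q P gq)^[t] x = u) :
    IsSaturated l x := by
  induction t generalizing x with
  | zero => rwa [← ht] at hu
  | succ t ih =>
    by_cases hxu : x = u
    · rwa [hxu]
    have hlen : (colFun q P gq x).length = k := (length_colFun x).trans hx
    refine hl x hx hxu ?_
    have hedge := hin _ hlen (ih hlen ht) ((x ++ [P x gq]).head (by simp))
    rwa [colFun, List.cons_head_tail] at hedge

lemma isSaturated_greedy [NeZero q] (hP : IsPrefFun q s P) (hgq : IsTop gq) (hsk : s ≤ k)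
    (hI : I.length = k + 1)
    {x : List (ZMod q)} (hx : x.length = k)
    (hreach : ∃ t, (colFun q (P ∘ lastN s) gq)^[t] x = I.take k) :
    IsSaturated (greedy q s (k + 1) P I) x := by
  set l := greedy q s (k + 1) P I
  have hpre : I <+: l := prefix_greedy q s (k + 1) P I
  have hkl : k ≤ l.length := by have := hpre.length_le; omega
  have hdistinct : HasDistinctWindows (k + 1) l := hasDistinctWindows_greedy hI.le
  have hend : IsSaturated l (lastN k l) :=
    isSaturated_lastN_of_nextDigit_eq_none hP (hsk.trans hkl) (nextDigit_greedy_eq_none hI)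
  have hclosed : l.take k = lastN k l := hdistinct.take_eq_lastN hkl hend
  have hstart : l.take k = I.take k := by
    obtain ⟨l', hl'⟩ := hpre
    rw [← hl', List.take_append_of_le_length (by omega)]
  obtain ⟨t, ht⟩ := hreach
  refine (leastEdgesLast_greedy hP hgq hsk hI).isSaturated_of_iterate ?_
    (fun y hy ↦ hdistinct.cons_isInfix hkl hclosed hy) hx ht
  rwa [← hstart, hclosed]

end Greedy

/-- the corollary producing full de Bruijn sequences.
If the last column function `g_q` has exactly one cycle `C` (generated by a
periodic vertex `v`, and every periodic point of `g_q` among `s`-words lies on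
`C`), and `(I_1,…,I_{n-1})` is on `C`, then `(P,I)` is a de Bruijn sequence of
order `n`: every `n`-word occurs exactly once as a contiguous window. -/
theorem corollary_full_deBruijn (q s n : ℕ) (hq : 2 ≤ q) (hs : s < n)
    (P : List (ZMod q) → Fin q → ZMod q) (hP : IsPrefFun q s P)
    (gq : Fin q) (hgq : (gq : ℕ) = q - 1)
    (v : List (ZMod q)) (hv : v.length = s)
    (m : ℕ) (hm : 0 < m) (hper : (colFun q P gq)^[m] v = v)
    (C : Set (List (ZMod q)))
    (hC : C = Set.range fun t => (colFun q P gq)^[t] v)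
    (huniq : ∀ w : List (ZMod q), w.length = s →
      ∀ m', 0 < m' → (colFun q P gq)^[m'] w = w → w ∈ C)
    (I : List (ZMod q)) (hI : I.length = n)
    (hIC : I.take s ∈ C)
    (hIrec : ∀ j, s ≤ j → j < n - 1 →
      I.getD j 0 = P ((I.drop (j - s)).take s) gq) :
    ∀ w : List (ZMod q), w.length = n → windowCount q n w (greedy q s n P I) = 1 := by
  subst hC
  have : NeZero q := ⟨by omega⟩
  obtain ⟨k, rfl⟩ : ∃ k, n = k + 1 := ⟨n - 1, by omega⟩
  have hsk : s ≤ k := Nat.le_of_lt_succ hs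
  have htop : IsTop gq := fun i ↦ Fin.le_def.2 (by omega)
  intro w hw
  obtain ⟨x, c, rfl⟩ := List.eq_nil_or_concat' w |>.resolve_left (by rintro rfl; simp at hw)
  have hx : x.length = k := by simpa using hw
  have hcycle : ∃ t, (colFun q P gq)^[t] (lastN s x) = I.take s :=
    exists_colFun_iterate_eq (s := s) ⟨m, hm, hper⟩
      (fun w hw ⟨m', hm', hper'⟩ ↦ huniq w hw m' hm' hper')
      (by rw [length_lastN]; omega) hIC
  have hreach : ∃ t, (colFun q (P ∘ lastN s) gq)^[t] x = I.take k :=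
    exists_colFun_comp_lastN_iterate_eq_take hIrec hsk (by omega) hx hcycle
  have hoccurs : x ++ [c] <:+: greedy q s (k + 1) P I :=
    isSaturated_greedy hP htop hsk hI hx hreach c
  exact (hasDistinctWindows_greedy hI.le).windowCount_eq_one hw hoccurs

end PaperDB
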